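/- Let X be a pospace, t a trace from α₀ to α₁, and α a point in the image of t distinct from α₀ and α₁. Let t₁ be the subtrace of t from α₀ to α and t₂ the subtrace of t from α to α₁, so that t = t₁ ⋆ t₂. Then every trace f in the interval [α, t] of tpos(X) (where α is regarded as the constant trace at α) factors uniquely as f = f₁ ⋆ f₂ with f₁ ∈ [α, t₁] and f₂ ∈ [α, t₂], and the map (f₁, f₂) ↦ f₁ ⋆ f₂ is an order isomorphism from the product poset [α, t₁] × [α, t₂] (ordered coordinatewise) onto the interval [α, t]. In particular, [α, t₁] and [α, t₂] are chains, and every chain in tpos(X) from α to t is a chain in this product of chains. -/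

import Mathlib

open unitInterval

noncomputable section

/-- A reparametrization of the unit interval: continuous, monotone, fixing the endpoints. -/
def IsReparam (φ : unitInterval → unitInterval) : Prop :=
  Continuous φ ∧ Monotone φ ∧ φ 0 = 0 ∧ φ 1 = 1

/-- Reparametrization equivalence of paths. -/
def ReparamEquiv {X : Type*} (f g : unitInterval → X) : Prop :=
  ∃ φ ψ : unitInterval → unitInterval, IsReparam φ ∧ IsReparam ψ ∧ f ∘ φ = g ∘ ψ

/-- A dipath in a pospace: a continuous monotone map `[0,1] → X`. -/
def IsDipath {X : Type*} [TopologicalSpace X] [Preorder X] (p : unitInterval → X) : Prop :=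
  Continuous p ∧ Monotone p

/-- Concatenation of paths: `f` (rescaled) on `[0,1/2]`, `g` (rescaled) on `[1/2,1]`. -/
def concatFun {X : Type*} (f g : unitInterval → X) : unitInterval → X :=
  fun t => if (t : ℝ) ≤ 1 / 2 then f (Set.projIcc 0 1 zero_le_one (2 * (t : ℝ)))
    else g (Set.projIcc 0 1 zero_le_one (2 * (t : ℝ) - 1))

/-- Traces: paths up to reparametrization equivalence. -/
def Trace (X : Type*) : Type _ := Quot (ReparamEquiv (X := X))

/-- The trace of a path. -/
def trc {X : Type*} (f : unitInterval → X) : Trace X := Quot.mk _ f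

/-- The order on traces of a pospace: `⟨f⟩ ≤ ⟨g⟩` iff `⟨g⟩ = ⟨u⟩ ⋆ ⟨f⟩ ⋆ ⟨v⟩` for dipaths `u,v`. -/
def TraceLE {X : Type*} [TopologicalSpace X] [PartialOrder X] (a b : Trace X) : Prop :=
  ∃ f u v : unitInterval → X,
    IsDipath f ∧ IsDipath u ∧ IsDipath v ∧
    u 1 = f 0 ∧ f 1 = v 0 ∧
    a = trc f ∧ b = trc (concatFun (concatFun u f) v)

/-- The interval `[a, b]` in the trace poset. -/
def TInterval {X : Type*} [TopologicalSpace X] [PartialOrder X] (a b : Trace X) :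
    Set (Trace X) :=
  {c | TraceLE a c ∧ TraceLE c b}

/-! ### Helper lemmas -/

theorem aux_ivt {X : Type*} [TopologicalSpace X] [PartialOrder X] [OrderClosedTopology X]
    {u v : ℝ → X} (hu : Continuous u) (hv : Continuous v) {a b : ℝ} (hab : a ≤ b)
    (hc : ∀ x ∈ Set.Icc a b, u x ≤ v x ∨ v x ≤ u x) (ha : u a ≤ v a) (hb : v b ≤ u b) :
    ∃ x ∈ Set.Icc a b, u x = v x := by
  have h := isPreconnected_closed_iff.1 (isPreconnected_Icc (a := a) (b := b))
    {x | u x ≤ v x} {x | v x ≤ u x} (isClosed_le hu hv) (isClosed_le hv hu)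
    (fun x hx => hc x hx) ⟨a, ⟨le_rfl, hab⟩, ha⟩ ⟨b, ⟨hab, le_rfl⟩, hb⟩
  obtain ⟨x, hx, h1, h2⟩ := h
  exact ⟨x, hx, le_antisymm h1 h2⟩

/-- Extension of a path to the real line. -/
def extR {X : Type*} (f : unitInterval → X) : ℝ → X :=
  fun x => f (Set.projIcc 0 1 zero_le_one x)

theorem extR_cont {X : Type*} [TopologicalSpace X] [PartialOrder X] {f : unitInterval → X}
    (hf : IsDipath f) : Continuous (extR f) := hf.1.comp continuous_projIcc

theorem extR_mono {X : Type*} [TopologicalSpace X] [PartialOrder X] {f : unitInterval → X}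
    (hf : IsDipath f) : Monotone (extR f) := hf.2.comp (Set.monotone_projIcc _)

theorem extR_zero {X : Type*} (f : unitInterval → X) : extR f 0 = f 0 := by
  simp only [extR]; congr 1; exact Set.projIcc_left _

theorem extR_one {X : Type*} (f : unitInterval → X) : extR f 1 = f 1 := by
  simp only [extR]; congr 1; exact Set.projIcc_right _

theorem extR_coe {X : Type*} (f : unitInterval → X) (s : unitInterval) : extR f s = f s := by
  simp only [extR, Set.projIcc_val]

theorem dip_total {X : Type*} [TopologicalSpace X] [PartialOrder X] {f : unitInterval → X}
    (hf : IsDipath f) {x y : X} (hx : x ∈ Set.range f) (hy : y ∈ Set.range f) :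
    x ≤ y ∨ y ≤ x := by
  obtain ⟨a, rfl⟩ := hx
  obtain ⟨b, rfl⟩ := hy
  rcases le_total a b with h | h
  · exact Or.inl (hf.2 h)
  · exact Or.inr (hf.2 h)

theorem dip_ge {X : Type*} [TopologicalSpace X] [PartialOrder X] {f : unitInterval → X}
    (hf : IsDipath f) {x : X} (hx : x ∈ Set.range f) : f 0 ≤ x := by
  obtain ⟨a, rfl⟩ := hx
  exact hf.2 a.2.1

theorem dip_le {X : Type*} [TopologicalSpace X] [PartialOrder X] {f : unitInterval → X}
    (hf : IsDipath f) {x : X} (hx : x ∈ Set.range f) : x ≤ f 1 := by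
  obtain ⟨a, rfl⟩ := hx
  exact hf.2 a.2.2

theorem dip_ivt {X : Type*} [TopologicalSpace X] [PartialOrder X] [OrderClosedTopology X]
    {f t : unitInterval → X} (hf : IsDipath f) (ht : IsDipath t)
    (hft : Set.range f ⊆ Set.range t) {x : X} (hx : x ∈ Set.range t)
    (h0 : f 0 ≤ x) (h1 : x ≤ f 1) : x ∈ Set.range f := by
  obtain ⟨z, hz, h⟩ := aux_ivt (u := extR f) (v := fun _ => x) (extR_cont hf) continuous_const
    (zero_le_one (α := ℝ)) (fun z _ => dip_total ht (hft ⟨_, rfl⟩) hx)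
    (by rw [extR_zero]; exact h0) (by rw [extR_one]; exact h1)
  exact ⟨_, h⟩

theorem dip_sub {X : Type*} [TopologicalSpace X] [PartialOrder X] [OrderClosedTopology X]
    {f g t : unitInterval → X} (hf : IsDipath f) (hg : IsDipath g) (ht : IsDipath t)
    (hft : Set.range f ⊆ Set.range t) (hgt : Set.range g ⊆ Set.range t)
    (h0 : f 0 ≤ g 0) (h1 : g 1 ≤ f 1) : Set.range g ⊆ Set.range f := fun _ hx =>
  dip_ivt hf ht hft (hgt hx) (h0.trans (dip_ge hg hx)) ((dip_le hg hx).trans h1)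

/-- The set of first coordinates of the fibre product on an antidiagonal. -/
def diagSet {X : Type*} (F G : ℝ → X) (s : ℝ) : Set ℝ :=
  {x | x ∈ Set.Icc (max 0 (2 * s - 1)) (min 1 (2 * s)) ∧ F x = G (2 * s - x)}

theorem diag_contra {X : Type*} [PartialOrder X] {F G : ℝ → X} (hF : Monotone F)
    (hG : Monotone G) {s x z w : ℝ} (hx : IsLeast (diagSet F G s) x)
    (hz0 : 0 ≤ z) (hw1 : w ≤ 1) (hzw : F z = G w) (hzx : z < x) (hw : 2 * s - x < w) : False := by
  obtain ⟨⟨⟨hx1, hx2⟩, hxe⟩, hl⟩ := hx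
  simp only [max_le_iff, le_min_iff] at hx1 hx2
  set e := min (x - z) (w - (2 * s - x)) with he
  have he0 : 0 < e := lt_min (by linarith) (by linarith)
  have he1 : e ≤ x - z := min_le_left _ _
  have he2 : e ≤ w - (2 * s - x) := min_le_right _ _
  have key : F x ≤ F z := by rw [hzw, hxe]; exact hG hw.le
  have hFe : F (x - e) = F x :=
    le_antisymm (hF (by linarith)) (key.trans (hF (by linarith)))
  have hGe : G (2 * s - (x - e)) = G (2 * s - x) := by
    refine le_antisymm ?_ (hG (by linarith))
    calc G (2 * s - (x - e)) ≤ G w := hG (by linarith)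
      _ = F z := hzw.symm
      _ ≤ F x := hF hzx.le
      _ = _ := hxe
  have := hl (a := x - e) ⟨⟨by simp only [max_le_iff]; constructor <;> linarith,
    by simp only [le_min_iff]; constructor <;> linarith⟩, by rw [hFe, hGe, hxe]⟩
  linarith

theorem trc_eq_of_range {X : Type*} [TopologicalSpace X] [PartialOrder X] [T2Space X]
    [OrderClosedTopology X] {f g : unitInterval → X} (hf : IsDipath f) (hg : IsDipath g)
    (h : Set.range f = Set.range g) : trc f = trc g := by
  have h00 : f 0 = g 0 := le_antisymm (dip_ge hf (h ▸ ⟨0, rfl⟩)) (dip_ge hg (h ▸ ⟨0, rfl⟩))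
  have h11 : f 1 = g 1 := le_antisymm (dip_le hg (h ▸ ⟨1, rfl⟩)) (dip_le hf (h ▸ ⟨1, rfl⟩))
  have hFm := extR_mono hf
  have hGm := extR_mono hg
  have hFc := extR_cont hf
  have hGc := extR_cont hg
  have ex : ∀ s : unitInterval, ∃ x, IsLeast (diagSet (extR f) (extR g) s) x := by
    intro s
    have hs0 := s.2.1
    have hs1 := s.2.2
    have hv : Continuous fun x : ℝ => extR g (2 * s - x) := by fun_prop
    apply IsCompact.exists_isLeast
    · have : diagSet (extR f) (extR g) s = Set.Icc (max 0 (2 * (s:ℝ) - 1)) (min 1 (2 * (s:ℝ))) ∩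
        {x | extR f x = extR g (2 * s - x)} := rfl
      rw [this]
      exact isCompact_Icc.inter_right (isClosed_eq hFc hv)
    · have hab : max 0 (2 * (s:ℝ) - 1) ≤ min 1 (2 * (s:ℝ)) := by
        simp only [max_le_iff, le_min_iff]; refine ⟨⟨?_, ?_⟩, ?_, ?_⟩ <;> linarith
      obtain ⟨x, hx, he⟩ := aux_ivt hFc hv hab
        (fun x _ => dip_total hf ⟨_, rfl⟩ (h ▸ ⟨_, rfl⟩))
        (by
          rcases max_choice 0 (2 * (s:ℝ) - 1) with hm | hm <;> rw [hm]
          · rw [extR_zero]; exact dip_ge hf (h ▸ ⟨_, rfl⟩)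
          · rw [show 2 * (s:ℝ) - (2 * s - 1) = 1 by ring, extR_one, ← h11]
            exact dip_le hf ⟨_, rfl⟩)
        (by
          rcases min_choice 1 (2 * (s:ℝ)) with hm | hm <;> rw [hm]
          · rw [extR_one]; exact dip_le hf (h ▸ ⟨_, rfl⟩)
          · rw [sub_self, extR_zero, ← h00]
            exact dip_ge hf ⟨_, rfl⟩)
      exact ⟨x, hx, he⟩
  choose p hp using ex
  have hb : ∀ s : unitInterval, (0 ≤ p s ∧ 2 * (s:ℝ) - 1 ≤ p s) ∧ p s ≤ 1 ∧ p s ≤ 2 * (s:ℝ) := by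
    intro s
    have := (hp s).1.1
    simpa only [Set.mem_Icc, max_le_iff, le_min_iff] using this
  have he : ∀ s : unitInterval, extR f (p s) = extR g (2 * s - p s) := fun s => (hp s).1.2
  have hm1 : ∀ s s' : unitInterval, (s:ℝ) ≤ s' → p s ≤ p s' := by
    intro s s' hs
    by_contra hlt
    push Not at hlt
    exact diag_contra hFm hGm (hp s) (hb s').1.1 (w := 2 * s' - p s')
      (by linarith [(hb s').1.2]) (he s') hlt (by linarith)
  have hm2 : ∀ s s' : unitInterval, (s:ℝ) ≤ s' → 2 * (s:ℝ) - p s ≤ 2 * s' - p s' := by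
    intro s s' hs
    by_contra hlt
    push Not at hlt
    exact diag_contra hFm hGm (hp s') (hb s).1.1 (w := 2 * s - p s)
      (by linarith [(hb s).1.2]) (he s) (by linarith) hlt
  have hpc : Continuous p := by
    apply LipschitzWith.continuous (K := 2)
    apply LipschitzWith.of_dist_le_mul
    intro s s'
    rw [Subtype.dist_eq, Real.dist_eq, Real.dist_eq]
    push_cast
    rcases le_total (s:ℝ) s' with hs | hs
    · have := hm1 _ _ hs
      have := hm2 _ _ hs
      rw [abs_of_nonpos (by linarith), abs_of_nonpos (by linarith)]; linarith
    · have := hm1 _ _ hs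
      have := hm2 _ _ hs
      rw [abs_of_nonneg (by linarith), abs_of_nonneg (by linarith)]; linarith
  have hp0 : p 0 = 0 := by
    have := hb 0
    simp at this; linarith
  have hp1 : p 1 = 1 := by
    have := hb 1
    simp at this; linarith
  refine Quot.sound ⟨fun s => Set.projIcc 0 1 zero_le_one (p s),
    fun s => Set.projIcc 0 1 zero_le_one (2 * s - p s), ⟨?_, ?_, ?_, ?_⟩, ⟨?_, ?_, ?_, ?_⟩, ?_⟩
  · exact continuous_projIcc.comp hpc
  · exact fun s s' hs => Set.monotone_projIcc _ (hm1 s s' hs)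
  · simp only [hp0]; exact Set.projIcc_left _
  · simp only [hp1]; exact Set.projIcc_right _
  · exact continuous_projIcc.comp (by fun_prop)
  · exact fun s s' hs => Set.monotone_projIcc _ (hm2 s s' hs)
  · simp only [hp0, Set.Icc.coe_zero, mul_zero, sub_zero]; exact Set.projIcc_left _
  · simp only [hp1, Set.Icc.coe_one]; norm_num
  · funext s; exact he s

theorem reparam_surj {φ : unitInterval → unitInterval} (h : IsReparam φ) :
    Function.Surjective φ := by
  intro y
  have := intermediate_value_Icc (zero_le_one (α := unitInterval)) h.1.continuousOn
  rw [h.2.2.1, h.2.2.2] at this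
  obtain ⟨x, _, hx⟩ := this ⟨y.2.1, y.2.2⟩
  exact ⟨x, hx⟩

theorem range_of_trc {X : Type*} {f g : unitInterval → X} (h : trc f = trc g) :
    Set.range f = Set.range g := by
  let R : Trace X → Set X := Quot.lift (fun f => Set.range f) (by
    rintro a b ⟨φ, ψ, hφ, hψ, he⟩
    show Set.range a = Set.range b
    rw [← (reparam_surj hφ).range_comp a, he, (reparam_surj hψ).range_comp b])
  exact congrArg R h

theorem trc_iff {X : Type*} [TopologicalSpace X] [PartialOrder X] [T2Space X]
    [OrderClosedTopology X] {f g : unitInterval → X} (hf : IsDipath f) (hg : IsDipath g) :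
    trc f = trc g ↔ Set.range f = Set.range g :=
  ⟨range_of_trc, trc_eq_of_range hf hg⟩

theorem concat_zero {X : Type*} (f g : unitInterval → X) : concatFun f g 0 = f 0 := by
  simp [concatFun]

theorem concat_one {X : Type*} (f g : unitInterval → X) : concatFun f g 1 = g 1 := by
  have : ¬ ((1:ℝ) ≤ 1 / 2) := by norm_num
  simp only [concatFun, Set.Icc.coe_one, if_neg this]
  norm_num

theorem concat_dip {X : Type*} [TopologicalSpace X] [PartialOrder X] {f g : unitInterval → X}
    (hf : IsDipath f) (hg : IsDipath g) (h : f 1 = g 0) : IsDipath (concatFun f g) := by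
  constructor
  · refine Continuous.if_le (f' := fun t : unitInterval => extR f (2 * (t:ℝ)))
      (g' := fun t : unitInterval => extR g (2 * (t:ℝ) - 1)) ?_ ?_ continuous_subtype_val
      continuous_const ?_
    · exact (extR_cont hf).comp (by fun_prop)
    · exact (extR_cont hg).comp (by fun_prop)
    · intro x hx
      rw [hx, show 2 * (1/2 : ℝ) - 1 = 0 by norm_num, show 2 * (1/2 : ℝ) = 1 by norm_num,
        extR_zero, extR_one, h]
  · intro s s' hs
    have hs' : (s:ℝ) ≤ s' := hs
    simp only [concatFun]
    split_ifs with h1 h2 h2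
    · exact extR_mono hf (by linarith)
    · exact (dip_le hf ⟨_, rfl⟩).trans (h.le.trans (dip_ge hg ⟨_, rfl⟩))
    · linarith
    · exact extR_mono hg (by linarith)

theorem concat_range {X : Type*} {f g : unitInterval → X} (h : f 1 = g 0) :
    Set.range (concatFun f g) = Set.range f ∪ Set.range g := by
  apply Set.Subset.antisymm
  · rintro _ ⟨s, rfl⟩
    simp only [concatFun]
    split_ifs
    · exact Or.inl ⟨_, rfl⟩
    · exact Or.inr ⟨_, rfl⟩
  · rintro _ (⟨s, rfl⟩ | ⟨s, rfl⟩)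
    · have hs0 := s.2.1
      have hs1 := s.2.2
      refine ⟨⟨(s:ℝ) / 2, by linarith, by linarith⟩, ?_⟩
      simp only [concatFun]
      rw [if_pos (by linarith), show 2 * ((s:ℝ) / 2) = s by ring, Set.projIcc_val]
    · have hs0 := s.2.1
      have hs1 := s.2.2
      rcases hs0.eq_or_lt with h0 | h0
      · have : s = 0 := Subtype.ext h0.symm
        subst this
        refine ⟨⟨1 / 2, by norm_num, by norm_num⟩, ?_⟩
        simp only [concatFun]
        rw [if_pos le_rfl, ← h, ← extR_one f]
        norm_num [extR]
      · refine ⟨⟨((s:ℝ) + 1) / 2, by linarith, by linarith⟩, ?_⟩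
        simp only [concatFun]
        rw [if_neg (by push Not; linarith), show 2 * (((s:ℝ) + 1) / 2) - 1 = s by ring,
          Set.projIcc_val]

/-- Restriction of a path to `[a, b]`. -/
def clampFun {X : Type*} (f : unitInterval → X) (a b : unitInterval) : unitInterval → X :=
  fun s => f (a ⊔ (s ⊓ b))

theorem clamp_dip {X : Type*} [TopologicalSpace X] [PartialOrder X] {f : unitInterval → X}
    (hf : IsDipath f) (a b : unitInterval) : IsDipath (clampFun f a b) :=
  ⟨hf.1.comp (by fun_prop),
   fun _ _ h => hf.2 (sup_le_sup_left (inf_le_inf_right _ h) _)⟩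

theorem clamp_zero {X : Type*} (f : unitInterval → X) (a b : unitInterval) :
    clampFun f a b 0 = f a := by
  have h : (0 : unitInterval) ≤ b := b.2.1
  have h' : (0 : unitInterval) ≤ a := a.2.1
  simp only [clampFun, inf_eq_left.2 h, sup_eq_left.2 h']

theorem clamp_one {X : Type*} (f : unitInterval → X) {a b : unitInterval} (hab : a ≤ b) :
    clampFun f a b 1 = f b := by
  have h : b ≤ (1 : unitInterval) := b.2.2
  simp only [clampFun, inf_eq_right.2 h, sup_eq_right.2 hab]

theorem clamp_range {X : Type*} (f : unitInterval → X) {a b : unitInterval} (hab : a ≤ b) :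
    Set.range (clampFun f a b) = f '' Set.Icc a b := by
  apply Set.Subset.antisymm
  · rintro _ ⟨s, rfl⟩
    exact ⟨_, ⟨le_sup_left, sup_le hab inf_le_right⟩, rfl⟩
  · rintro _ ⟨s, ⟨h1, h2⟩, rfl⟩
    refine ⟨s, ?_⟩
    simp only [clampFun, inf_eq_left.2 h2, sup_eq_right.2 h1]

theorem le_of_sub {X : Type*} [TopologicalSpace X] [PartialOrder X] [T2Space X]
    [OrderClosedTopology X] {f g : unitInterval → X} (hf : IsDipath f) (hg : IsDipath g)
    (h : Set.range f ⊆ Set.range g) : TraceLE (trc f) (trc g) := by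
  have : ∃ a b, a ≤ b ∧ g a = f 0 ∧ g b = f 1 := by
    obtain ⟨a, ha⟩ := h ⟨0, rfl⟩
    obtain ⟨b, hb⟩ := h ⟨1, rfl⟩
    rcases le_total a b with hab | hab
    · exact ⟨a, b, hab, ha, hb⟩
    · refine ⟨a, a, le_rfl, ha, ?_⟩
      have h1 := hg.2 hab
      have h2 : f 0 ≤ f 1 := hf.2 zero_le_one
      rw [← ha, ← hb] at h2
      rw [← hb]; exact le_antisymm h2 h1
  obtain ⟨a, b, hab, ha, hb⟩ := this
  have ha0 : (0 : unitInterval) ≤ a := a.2.1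
  have hb1 : b ≤ (1 : unitInterval) := b.2.2
  have hu := clamp_dip hg 0 a
  have hv := clamp_dip hg b 1
  have hu1 : clampFun g 0 a 1 = f 0 := by rw [clamp_one g ha0, ha]
  have hv0 : f 1 = clampFun g b 1 0 := by rw [clamp_zero, hb]
  have hc1 := concat_dip hu hf hu1
  have hc1v : concatFun (clampFun g 0 a) f 1 = clampFun g b 1 0 := by rw [concat_one, hv0]
  have hc := concat_dip hc1 hv hc1v
  refine ⟨f, _, _, hf, hu, hv, hu1, hv0, rfl, trc_eq_of_range hg hc ?_⟩
  rw [concat_range hc1v, concat_range hu1, clamp_range g ha0, clamp_range g hb1]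
  apply Set.Subset.antisymm
  · rintro _ ⟨c, rfl⟩
    rcases le_total c a with hca | hca
    · exact Or.inl (Or.inl ⟨c, ⟨c.2.1, hca⟩, rfl⟩)
    rcases le_total b c with hcb | hcb
    · exact Or.inr ⟨c, ⟨hcb, c.2.2⟩, rfl⟩
    refine Or.inl (Or.inr (dip_ivt hf hg h ⟨c, rfl⟩ ?_ ?_))
    · rw [← ha]; exact hg.2 hca
    · rw [← hb]; exact hg.2 hcb
  · exact Set.union_subset (Set.union_subset (Set.image_subset_range _ _) h)
      (Set.image_subset_range _ _)

theorem exists_of_le {X : Type*} [TopologicalSpace X] [PartialOrder X] {a b : Trace X}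
    (h : TraceLE a b) : ∃ f g : unitInterval → X, IsDipath f ∧ IsDipath g ∧ a = trc f ∧
      b = trc g ∧ Set.range f ⊆ Set.range g := by
  obtain ⟨f, u, v, hf, hu, hv, h1, h2, rfl, rfl⟩ := h
  have h3 : concatFun u f 1 = v 0 := by rw [concat_one, h2]
  refine ⟨f, _, hf, concat_dip (concat_dip hu hf h1) hv h3, rfl, rfl, ?_⟩
  rw [concat_range h3, concat_range h1]
  exact fun x hx => Or.inl (Or.inr hx)

theorem le_iff {X : Type*} [TopologicalSpace X] [PartialOrder X] [T2Space X]
    [OrderClosedTopology X] {f g : unitInterval → X} (hf : IsDipath f) (hg : IsDipath g) :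
    TraceLE (trc f) (trc g) ↔ Set.range f ⊆ Set.range g := by
  refine ⟨fun h => ?_, le_of_sub hf hg⟩
  obtain ⟨f', g', _, _, h1, h2, h3⟩ := exists_of_le h
  rw [range_of_trc h1, range_of_trc h2]; exact h3

theorem mem_iff {X : Type*} [TopologicalSpace X] [PartialOrder X] [T2Space X]
    [OrderClosedTopology X] {x : X} {f t : unitInterval → X} (hf : IsDipath f)
    (ht : IsDipath t) :
    trc f ∈ TInterval (trc (fun _ => x)) (trc t) ↔
      x ∈ Set.range f ∧ Set.range f ⊆ Set.range t := by
  have hc : IsDipath (fun _ : unitInterval => x) := ⟨continuous_const, monotone_const⟩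
  show _ ∧ _ ↔ _
  rw [le_iff hc hf, le_iff hf ht, Set.range_const, Set.singleton_subset_iff]

theorem mem_dip {X : Type*} [TopologicalSpace X] [PartialOrder X] {a b c : Trace X}
    (h : c ∈ TInterval a b) : ∃ f, IsDipath f ∧ c = trc f := by
  obtain ⟨f, _, _, hf, _, _, _, _, h, _⟩ := h.2
  exact ⟨f, hf, h⟩

/-- Let `X` be a pospace and `t = t₁ ⋆ t₂` a trace passing through an interior
point `α = t₁(1) = t₂(0)` distinct from the endpoints.  Then the intervals `[α, t₁]` and
`[α, t₂]` of the trace poset are chains, every trace in `[α, t]` factors uniquely as `f₁ ⋆ f₂`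
with `(f₁, f₂) ∈ [α, t₁] × [α, t₂]`, and concatenation `(f₁, f₂) ↦ f₁ ⋆ f₂` is an order
isomorphism from the product poset `[α, t₁] × [α, t₂]` onto `[α, t]`; in particular every chain
in `[α, t]` corresponds to a chain in this product of chains. -/
theorem interval_iso_product_of_chains
    {X : Type*} [TopologicalSpace X] [PartialOrder X] [T2Space X] [OrderClosedTopology X]
    (t₁ t₂ : unitInterval → X) (ht₁ : IsDipath t₁) (ht₂ : IsDipath t₂)
    (hmid : t₁ 1 = t₂ 0) (hne₀ : t₁ 1 ≠ t₁ 0) (hne₁ : t₂ 0 ≠ t₂ 1) :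
    -- notation: α as a constant trace, the two side intervals and the full interval
    ∀ cα I₁ I₂ J, cα = trc (fun _ => t₁ 1) →
      I₁ = TInterval cα (trc t₁) → I₂ = TInterval cα (trc t₂) →
      J = TInterval cα (trc (concatFun t₁ t₂)) →
      -- the two intervals are chains
      (IsChain TraceLE I₁ ∧ IsChain TraceLE I₂) ∧
      -- unique factorization of any trace in [α, t]
      (∀ c ∈ J, ∃! p : Trace X × Trace X, p.1 ∈ I₁ ∧ p.2 ∈ I₂ ∧
        ∃ g₁ g₂ : unitInterval → X, IsDipath g₁ ∧ IsDipath g₂ ∧ g₁ 1 = g₂ 0 ∧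
          p.1 = trc g₁ ∧ p.2 = trc g₂ ∧ c = trc (concatFun g₁ g₂)) ∧
      -- concatenation maps the product into [α, t] ...
      (∀ g₁ g₂ : unitInterval → X, IsDipath g₁ → IsDipath g₂ → g₁ 1 = g₂ 0 →
        trc g₁ ∈ I₁ → trc g₂ ∈ I₂ → trc (concatFun g₁ g₂) ∈ J) ∧
      -- ... and is an order isomorphism for the coordinatewise order
      (∀ g₁ g₂ g₁' g₂' : unitInterval → X,
        IsDipath g₁ → IsDipath g₂ → IsDipath g₁' → IsDipath g₂' →
        g₁ 1 = g₂ 0 → g₁' 1 = g₂' 0 →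
        trc g₁ ∈ I₁ → trc g₂ ∈ I₂ → trc g₁' ∈ I₁ → trc g₂' ∈ I₂ →
        (TraceLE (trc (concatFun g₁ g₂)) (trc (concatFun g₁' g₂')) ↔
          TraceLE (trc g₁) (trc g₁') ∧ TraceLE (trc g₂) (trc g₂'))) ∧
      -- every chain in [α, t] is (corresponds to) a chain in the product of the two chains
      (∀ C : Set (Trace X), C ⊆ J → IsChain TraceLE C →
        IsChain (fun p q : Trace X × Trace X => TraceLE p.1 q.1 ∧ TraceLE p.2 q.2)
          {p : Trace X × Trace X | p.1 ∈ I₁ ∧ p.2 ∈ I₂ ∧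
            ∃ g₁ g₂ : unitInterval → X, IsDipath g₁ ∧ IsDipath g₂ ∧ g₁ 1 = g₂ 0 ∧
              p.1 = trc g₁ ∧ p.2 = trc g₂ ∧ trc (concatFun g₁ g₂) ∈ C}) := by
  rintro cα I₁ I₂ J rfl rfl rfl rfl
  have ht := concat_dip ht₁ ht₂ hmid
  have hrt := concat_range hmid
  -- elements of `I₁` are below `α`, elements of `I₂` are above
  have low : ∀ {x}, x ∈ Set.range t₁ → x ≤ t₁ 1 := fun hx => dip_le ht₁ hx
  have high : ∀ {x}, x ∈ Set.range t₂ → t₁ 1 ≤ x := fun hx => hmid ▸ dip_ge ht₂ hx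
  -- inclusion of unions is coordinatewise inclusion
  have split : ∀ {A B A' B' : Set X}, A ⊆ Set.range t₁ → B ⊆ Set.range t₂ →
      A' ⊆ Set.range t₁ → B' ⊆ Set.range t₂ → t₁ 1 ∈ A' → t₁ 1 ∈ B' →
      A ∪ B ⊆ A' ∪ B' → A ⊆ A' ∧ B ⊆ B' := by
    intro A B A' B' hA hB hA' hB' hα hα' h
    constructor
    · intro x hx
      rcases h (Or.inl hx) with h' | h'
      · exact h'
      · rw [le_antisymm (low (hA hx)) (high (hB' h'))]; exact hα
    · intro x hx
      rcases h (Or.inr hx) with h' | h'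
      · rw [le_antisymm (low (hA' h')) (high (hB hx))]; exact hα'
      · exact h'
  have iso : ∀ g₁ g₂ g₁' g₂' : unitInterval → X,
        IsDipath g₁ → IsDipath g₂ → IsDipath g₁' → IsDipath g₂' →
        g₁ 1 = g₂ 0 → g₁' 1 = g₂' 0 →
        trc g₁ ∈ TInterval (trc fun _ => t₁ 1) (trc t₁) →
        trc g₂ ∈ TInterval (trc fun _ => t₁ 1) (trc t₂) →
        trc g₁' ∈ TInterval (trc fun _ => t₁ 1) (trc t₁) →
        trc g₂' ∈ TInterval (trc fun _ => t₁ 1) (trc t₂) →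
        (TraceLE (trc (concatFun g₁ g₂)) (trc (concatFun g₁' g₂')) ↔
          TraceLE (trc g₁) (trc g₁') ∧ TraceLE (trc g₂) (trc g₂')) := by
    intro g₁ g₂ g₁' g₂' d₁ d₂ d₁' d₂' e e' m₁ m₂ m₁' m₂'
    rw [mem_iff d₁ ht₁] at m₁
    rw [mem_iff d₂ ht₂] at m₂
    rw [mem_iff d₁' ht₁] at m₁'
    rw [mem_iff d₂' ht₂] at m₂'
    rw [le_iff (concat_dip d₁ d₂ e) (concat_dip d₁' d₂' e'), le_iff d₁ d₁', le_iff d₂ d₂',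
      concat_range e, concat_range e']
    exact ⟨split m₁.2 m₂.2 m₁'.2 m₂'.2 m₁'.1 m₂'.1, fun h => Set.union_subset_union h.1 h.2⟩
  refine ⟨⟨?_, ?_⟩, ?_, ?_, iso, ?_⟩
  · intro a ha b hb _
    obtain ⟨f, hf, rfl⟩ := mem_dip ha
    obtain ⟨g, hg, rfl⟩ := mem_dip hb
    rw [mem_iff hf ht₁] at ha
    rw [mem_iff hg ht₁] at hb
    rw [le_iff hf hg, le_iff hg hf]
    have f1 : f 1 = t₁ 1 := le_antisymm (low (ha.2 ⟨1, rfl⟩)) (dip_le hf ha.1)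
    have g1 : g 1 = t₁ 1 := le_antisymm (low (hb.2 ⟨1, rfl⟩)) (dip_le hg hb.1)
    rcases dip_total ht₁ (ha.2 ⟨0, rfl⟩) (hb.2 ⟨0, rfl⟩) with h | h
    · exact Or.inr (dip_sub hf hg ht₁ ha.2 hb.2 h (by rw [f1, g1]))
    · exact Or.inl (dip_sub hg hf ht₁ hb.2 ha.2 h (by rw [f1, g1]))
  · intro a ha b hb _
    obtain ⟨f, hf, rfl⟩ := mem_dip ha
    obtain ⟨g, hg, rfl⟩ := mem_dip hb
    rw [mem_iff hf ht₂] at ha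
    rw [mem_iff hg ht₂] at hb
    rw [le_iff hf hg, le_iff hg hf]
    have f0 : f 0 = t₁ 1 := le_antisymm (dip_ge hf ha.1) (high (ha.2 ⟨0, rfl⟩))
    have g0 : g 0 = t₁ 1 := le_antisymm (dip_ge hg hb.1) (high (hb.2 ⟨0, rfl⟩))
    rcases dip_total ht₂ (ha.2 ⟨1, rfl⟩) (hb.2 ⟨1, rfl⟩) with h | h
    · exact Or.inl (dip_sub hg hf ht₂ hb.2 ha.2 (by rw [f0, g0]) h)
    · exact Or.inr (dip_sub hf hg ht₂ ha.2 hb.2 (by rw [f0, g0]) h)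
  · intro c hc
    obtain ⟨f, hf, rfl⟩ := mem_dip hc
    rw [mem_iff hf ht, hrt] at hc
    obtain ⟨⟨a, ha⟩, hsub⟩ := hc
    have ha0 : (0 : unitInterval) ≤ a := a.2.1
    have ha1 : a ≤ (1 : unitInterval) := a.2.2
    have d₁ := clamp_dip hf 0 a
    have d₂ := clamp_dip hf a 1
    have e : clampFun f 0 a 1 = clampFun f a 1 0 := by rw [clamp_one f ha0, clamp_zero]
    have hu : Set.range f = Set.range (clampFun f 0 a) ∪ Set.range (clampFun f a 1) := by
      rw [clamp_range f ha0, clamp_range f ha1, ← Set.image_union]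
      rw [Set.Icc_union_Icc_eq_Icc ha0 ha1, ← Set.image_univ]
      congr 1
      ext x
      exact ⟨fun _ => ⟨x.2.1, x.2.2⟩, fun _ => trivial⟩
    have m₁ : trc (clampFun f 0 a) ∈ TInterval (trc fun _ => t₁ 1) (trc t₁) := by
      rw [mem_iff d₁ ht₁]
      refine ⟨⟨1, by rw [clamp_one f ha0, ha]⟩, ?_⟩
      rw [clamp_range f ha0]
      rintro _ ⟨s, hs, rfl⟩
      rcases hsub ⟨s, rfl⟩ with h | h
      · exact h
      · rw [le_antisymm (ha ▸ hf.2 hs.2) (high h)]; exact ⟨1, rfl⟩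
    have m₂ : trc (clampFun f a 1) ∈ TInterval (trc fun _ => t₁ 1) (trc t₂) := by
      rw [mem_iff d₂ ht₂]
      refine ⟨⟨0, by rw [clamp_zero, ha]⟩, ?_⟩
      rw [clamp_range f ha1]
      rintro _ ⟨s, hs, rfl⟩
      rcases hsub ⟨s, rfl⟩ with h | h
      · rw [le_antisymm (low h) (ha ▸ hf.2 hs.1)]; exact ⟨0, hmid.symm⟩
      · exact h
    refine ⟨(trc (clampFun f 0 a), trc (clampFun f a 1)), ⟨m₁, m₂, _, _, d₁, d₂, e, rfl, rfl,
      trc_eq_of_range hf (concat_dip d₁ d₂ e) (by rw [concat_range e, hu])⟩, ?_⟩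
    rintro ⟨p, q⟩ ⟨mp, mq, g₁, g₂, k₁, k₂, e', hp, hq, hfg⟩
    simp only at mp mq hp hq
    subst hp hq
    have hr := range_of_trc hfg
    rw [concat_range e', hu] at hr
    rw [mem_iff k₁ ht₁] at mp
    rw [mem_iff k₂ ht₂] at mq
    rw [mem_iff d₁ ht₁] at m₁
    rw [mem_iff d₂ ht₂] at m₂
    have s1 := split m₁.2 m₂.2 mp.2 mq.2 mp.1 mq.1 hr.subset
    have s2 := split mp.2 mq.2 m₁.2 m₂.2 m₁.1 m₂.1 hr.symm.subset
    exact Prod.ext (trc_eq_of_range k₁ d₁ (s2.1.antisymm s1.1))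
      (trc_eq_of_range k₂ d₂ (s2.2.antisymm s1.2))
  · intro g₁ g₂ d₁ d₂ e m₁ m₂
    rw [mem_iff d₁ ht₁] at m₁
    rw [mem_iff d₂ ht₂] at m₂
    rw [mem_iff (concat_dip d₁ d₂ e) ht, concat_range e, hrt]
    exact ⟨Or.inl m₁.1, Set.union_subset_union m₁.2 m₂.2⟩
  · rintro C - hC ⟨p, q⟩ ⟨mp, mq, g₁, g₂, d₁, d₂, e, hp, hq, hm⟩ ⟨p', q'⟩
      ⟨mp', mq', g₁', g₂', d₁', d₂', e', hp', hq', hm'⟩ -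
    simp only at mp mq hp hq mp' mq' hp' hq' ⊢
    subst hp hq hp' hq'
    rw [← iso g₁ g₂ g₁' g₂' d₁ d₂ d₁' d₂' e e' mp mq mp' mq',
      ← iso g₁' g₂' g₁ g₂ d₁' d₂' d₁ d₂ e' e mp' mq' mp mq]
    by_cases heq : trc (concatFun g₁ g₂) = trc (concatFun g₁' g₂')
    · left
      rw [le_iff (concat_dip d₁ d₂ e) (concat_dip d₁' d₂' e'), range_of_trc heq]
    · exact hC hm hm' heq

end
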